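/- arXiv:math/0412067 — 2 statements merged into one kernel-verified Lean document; each statement's English description precedes it below -/
import Mathlib

section
/- Let q be real with 0 < q < 1, let r ≥ 1 be an integer, let ω_1, …, ω_r be positive reals, let s ∈ ℂ, let t ∈ ℂ with Re(t) > r − 1, and let z ∈ ℂ with Re(z) > 0. Then ζ_{q,r}(s,t,z;ω) = (1−q)^s · ∑_{l=0}^{∞} ((s)_l / l!) · q^{lz} · ∏_{j=1}^{r} (1 − q^{ω_j(t−j+1+l)})^{−1}, where (s)_l := s(s+1)⋯(s+l−1) is the ascending Pochhammer symbol, each factor 1 − q^{ω_j(t−j+1+l)} is nonzero, and the series on the right converges absolutely. -/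
/-!
With `aᵢ = q ^ (ωᵢ τᵢ)`, `bᵢ = q ^ ωᵢ` and `y = q ^ z`, the term of the zeta series at `n` is
`(1 - q) ^ s * ∏ aᵢ ^ nᵢ * (1 - y ∏ bᵢ ^ nᵢ) ^ (-s)`. Expand the last factor in the binomial series
`∑ cₗ (y ∏ bᵢ ^ nᵢ) ^ l`. Since `|bᵢ| ≤ 1`, the resulting double series is dominated by
`∑ ∏ |aᵢ| ^ nᵢ * |cₗ yˡ|`, so the summations may be interchanged; for fixed `l` the sum over `n` is
a product of geometric series with ratios `aᵢ bᵢˡ`.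
-/

open Complex

/-- `[w]_q = (1 - q^w)/(1 - q)` for real `0 < q < 1` and complex `w`
(principal complex power of the positive real `q`). -/
noncomputable def qNum (q : ℝ) (w : ℂ) : ℂ := (1 - (q : ℂ) ^ w) / (1 - (q : ℂ))

/-- The `q`-analogue `ζ_{q,r}(s,t,z;ω)` of the Barnes multiple zeta function with
parameters `ω = (ω₁,…,ω_r)`: the sum over all `r`-tuples `(n₁,…,n_r)` of nonnegative
integers of `q^{n₁ω₁t + n₂ω₂(t−1) + ⋯ + n_rω_r(t−r+1)} / [n₁ω₁+⋯+n_rω_r+z]_q^s`. -/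
noncomputable def zetaQOmega (q : ℝ) (r : ℕ) (ω : Fin r → ℝ) (s t z : ℂ) : ℂ :=
  ∑' f : Fin r → ℕ,
    (q : ℂ) ^ (∑ i : Fin r, (f i : ℂ) * (ω i : ℂ) * (t - (i : ℕ)))
      / (qNum q (((∑ i : Fin r, (f i : ℝ) * ω i : ℝ) : ℂ) + z)) ^ s

section PiProd

universe v

variable {ι : Type*} [hι : Fintype ι] {κ : ι → Type v} {R : Type*} [NormedCommRing R]
  {f : ∀ i, κ i → R}

theorem summable_norm_pi_prod (hf : ∀ i, Summable fun k => ‖f i k‖) :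
    Summable fun n : ∀ i, κ i => ‖∏ i, f i (n i)‖ := by
  suffices H : ∀ (κ : ι → Type v) (f : ∀ i, κ i → R), (∀ i, Summable fun k => ‖f i k‖) →
      Summable fun n : ∀ i, κ i => ‖∏ i, f i (n i)‖ from H _ _ hf
  refine Fintype.induction_empty_option ?of_equiv ?empty ?option ι (h_fintype := hι)
  case of_equiv =>
    intro α β _ e ih κ f hf
    let := Fintype.ofEquiv β e.symm
    refine (Equiv.piCongrLeft κ e).summable_iff.1 ((ih _ _ fun i => hf (e i)).congr fun n => ?_)
    simp only [Function.comp_apply, ← e.prod_comp, Equiv.piCongrLeft_apply_apply]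
  case empty => exact fun _ _ _ => .of_finite
  case option =>
    intro α _ ih κ f hf
    refine Equiv.piOptionEquivProd.symm.summable_iff.1
      (((hf none).mul_norm (ih _ _ fun i => hf (some i))).congr fun n => ?_)
    simp only [Function.comp_apply, Fintype.prod_option, Equiv.piOptionEquivProd_symm_apply]

theorem hasSum_pi_prod [CompleteSpace R] {a : ι → R} (hf : ∀ i, Summable fun k => ‖f i k‖)
    (ha : ∀ i, HasSum (f i) (a i)) :
    HasSum (fun n : ∀ i, κ i => ∏ i, f i (n i)) (∏ i, a i) := by
  suffices H : ∀ (κ : ι → Type v) (f : ∀ i, κ i → R) (a : ι → R),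
      (∀ i, Summable fun k => ‖f i k‖) → (∀ i, HasSum (f i) (a i)) →
      HasSum (fun n : ∀ i, κ i => ∏ i, f i (n i)) (∏ i, a i) from H _ _ _ hf ha
  refine Fintype.induction_empty_option ?of_equiv ?empty ?option ι (h_fintype := hι)
  case of_equiv =>
    intro α β _ e ih κ f a hf ha
    let := Fintype.ofEquiv β e.symm
    rw [← (Equiv.piCongrLeft κ e).hasSum_iff, ← e.prod_comp]
    refine (ih _ _ _ (fun i => hf (e i)) fun i => ha (e i)).congr_fun fun n => ?_
    simp only [Function.comp_apply, ← e.prod_comp, Equiv.piCongrLeft_apply_apply]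
  case empty =>
    intro κ f a _ _
    simp
  case option =>
    intro α _ ih κ f a hf ha
    have htail := ih _ _ _ (fun i => hf (some i)) fun i => ha (some i)
    have hsummable :=
      summable_mul_of_summable_norm (hf none) (summable_norm_pi_prod fun i => hf (some i))
    rw [← Equiv.piOptionEquivProd.symm.hasSum_iff, Fintype.prod_option]
    refine ((ha none).mul htail hsummable).congr_fun fun n => ?_
    simp only [Function.comp_apply, Fintype.prod_option, Equiv.piOptionEquivProd_symm_apply]

end PiProd

section GeometricProd

variable {ι : Type*} [Fintype ι] {𝕜 : Type*} [NormedField 𝕜]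

theorem summable_norm_prod_pow {a : ι → 𝕜} (ha : ∀ i, ‖a i‖ < 1) :
    Summable fun n : ι → ℕ => ‖∏ i, a i ^ n i‖ :=
  summable_norm_pi_prod fun i => summable_norm_geometric_of_norm_lt_one (ha i)

theorem hasSum_prod_pow [CompleteSpace 𝕜] {a : ι → 𝕜} (ha : ∀ i, ‖a i‖ < 1) :
    HasSum (fun n : ι → ℕ => ∏ i, a i ^ n i) (∏ i, (1 - a i)⁻¹) :=
  hasSum_pi_prod (fun i => summable_norm_geometric_of_norm_lt_one (ha i))
    fun i => hasSum_geometric_of_norm_lt_one (ha i)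

theorem prod_pow_mul_mul_pow_eq (a b : ι → 𝕜) (c y : 𝕜) (n : ι → ℕ) (l : ℕ) :
    (∏ i, a i ^ n i) * (c * (y * ∏ i, b i ^ n i) ^ l) =
      c * y ^ l * ∏ i, (a i * b i ^ l) ^ n i := by
  simp only [mul_pow, Finset.prod_mul_distrib, ← Finset.prod_pow, pow_right_comm]
  ring

theorem norm_mul_pow_lt_one {x y : 𝕜} (hx : ‖x‖ < 1) (hy : ‖y‖ ≤ 1) (l : ℕ) :
    ‖x * y ^ l‖ < 1 := by
  rw [norm_mul, norm_pow]
  exact mul_lt_one_of_nonneg_of_lt_one_left (norm_nonneg x) hx (pow_le_one₀ (norm_nonneg y) hy)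

variable {a b : ι → 𝕜} {c : ℕ → 𝕜} {y : 𝕜} (ha : ∀ i, ‖a i‖ < 1) (hb : ∀ i, ‖b i‖ ≤ 1)
  (hc : Summable fun l => ‖c l * y ^ l‖)
include ha hb hc

theorem summable_norm_prod_pow_mul_mul_pow :
    Summable fun p : (ι → ℕ) × ℕ =>
      ‖(∏ i, a i ^ p.1 i) * (c p.2 * (y * ∏ i, b i ^ p.1 i) ^ p.2)‖ := by
  refine ((summable_norm_prod_pow ha).mul_norm hc).of_nonneg_of_le (fun _ => norm_nonneg _) ?_
  rintro ⟨n, l⟩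
  have hbn : ‖∏ i, b i ^ n i‖ ≤ 1 := by
    rw [norm_prod]
    refine Finset.prod_le_one (fun _ _ => norm_nonneg _) fun i _ => ?_
    rw [norm_pow]
    exact pow_le_one₀ (norm_nonneg _) (hb i)
  simp only [norm_mul, norm_pow]
  gcongr
  exact mul_le_of_le_one_right (norm_nonneg y) hbn

variable [CompleteSpace 𝕜]

theorem summable_norm_mul_pow_mul_prod_inv_one_sub :
    Summable fun l => ‖c l * y ^ l * ∏ i, (1 - a i * b i ^ l)⁻¹‖ := by
  have hswap := (summable_norm_prod_pow_mul_mul_pow ha hb hc).prod_symm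
  refine hswap.prod.of_nonneg_of_le (fun _ => norm_nonneg _) fun l => ?_
  rw [← (hasSum_prod_pow fun i => norm_mul_pow_lt_one (ha i) (hb i) l).tsum_eq, ← tsum_mul_left]
  simp only [← prod_pow_mul_mul_pow_eq]
  exact norm_tsum_le_tsum_norm (hswap.prod_factor l)

theorem hasSum_prod_pow_mul_tsum :
    HasSum (fun n : ι → ℕ => (∏ i, a i ^ n i) * ∑' l, c l * (y * ∏ i, b i ^ n i) ^ l)
      (∑' l, c l * y ^ l * ∏ i, (1 - a i * b i ^ l)⁻¹) := by
  let F (n : ι → ℕ) (l : ℕ) : 𝕜 := (∏ i, a i ^ n i) * (c l * (y * ∏ i, b i ^ n i) ^ l)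
  have hF : Summable (Function.uncurry F) := (summable_norm_prod_pow_mul_mul_pow ha hb hc).of_norm
  have hinner (l : ℕ) : ∑' n, F n l = c l * y ^ l * ∏ i, (1 - a i * b i ^ l)⁻¹ := by
    simp only [F, prod_pow_mul_mul_pow_eq, tsum_mul_left]
    rw [(hasSum_prod_pow fun i => norm_mul_pow_lt_one (ha i) (hb i) l).tsum_eq]
  have houter : HasSum (fun n => ∑' l, F n l) (∑' n, ∑' l, F n l) := hF.prod.hasSum
  rw [← hF.tsum_comm, tsum_congr hinner] at houter
  simpa only [F, tsum_mul_left] using houter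

end GeometricProd

section Binomial

theorem ring_multichoose_eq_ascPochhammer_eval_div {K : Type*} [Field K] [CharZero K] (s : K)
    (n : ℕ) : Ring.multichoose s n = (ascPochhammer K n).eval s / n.factorial := by
  rw [eq_div_iff (Nat.cast_ne_zero.2 n.factorial_ne_zero), mul_comm, ← nsmul_eq_mul,
    Ring.factorial_nsmul_multichoose_eq_ascPochhammer, Polynomial.ascPochhammer_smeval_eq_eval]

theorem hasSum_ascPochhammer_mul_pow (s : ℂ) {x : ℂ} (hx : ‖x‖ < 1) :
    HasSum (fun l : ℕ => (ascPochhammer ℂ l).eval s / l.factorial * x ^ l)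
      (1 / (1 - x) ^ s) := by
  have hx' : x ∈ Metric.eball (0 : ℂ) 1 := by
    rwa [← ENNReal.ofReal_one, Metric.eball_ofReal, mem_ball_zero_iff]
  simpa [FormalMultilinearSeries.ofScalars_apply_eq, ← Ring.multichoose_eq,
    ring_multichoose_eq_ascPochhammer_eval_div, mul_comm] using
    (one_div_one_sub_cpow_hasFPowerSeriesOnBall_zero s).hasSum hx'

end Binomial

section QNum

theorem ofReal_mul_cpow {c : ℝ} (hc : 0 ≤ c) (x s : ℂ) : (c * x) ^ s = (c : ℂ) ^ s * x ^ s := by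
  obtain rfl | hs := eq_or_ne s 0
  · simp only [cpow_zero, mul_one]
  obtain rfl | hx := eq_or_ne x 0
  · simp only [mul_zero, zero_cpow hs]
  obtain rfl | hc := hc.eq_or_lt
  · simp only [ofReal_zero, zero_mul, zero_cpow hs]
  have hc' : (c : ℂ) ≠ 0 := ofReal_ne_zero.2 hc.ne'
  rw [cpow_def_of_ne_zero (mul_ne_zero hc' hx), cpow_def_of_ne_zero hc', cpow_def_of_ne_zero hx,
    log_ofReal_mul hc hx, ofReal_log hc.le, add_mul, exp_add]

variable {q : ℝ}

theorem one_div_qNum_cpow (hq : q ≤ 1) (w s : ℂ) :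
    1 / qNum q w ^ s = ((1 - q : ℝ) : ℂ) ^ s * (1 / (1 - (q : ℂ) ^ w) ^ s) := by
  have hq' : 0 ≤ 1 - q := sub_nonneg.2 hq
  have hqNum : qNum q w = ((1 - q)⁻¹ : ℝ) * (1 - (q : ℂ) ^ w) := by
    rw [qNum, div_eq_inv_mul, ofReal_inv, ofReal_sub, ofReal_one]
  rw [hqNum, ofReal_mul_cpow (inv_nonneg.2 hq'), ofReal_inv, inv_cpow_ofReal_nonneg hq',
    one_div, mul_inv, inv_inv, one_div]

theorem norm_ofReal_cpow_lt_one (hq0 : 0 < q) (hq1 : q < 1) {w : ℂ} (hw : 0 < w.re) :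
    ‖(q : ℂ) ^ w‖ < 1 := by
  rw [norm_cpow_eq_rpow_re_of_pos hq0]
  exact Real.rpow_lt_one hq0.le hq1 hw

theorem norm_ofReal_cpow_le_one (hq0 : 0 < q) (hq1 : q ≤ 1) {w : ℂ} (hw : 0 ≤ w.re) :
    ‖(q : ℂ) ^ w‖ ≤ 1 := by
  rw [norm_cpow_eq_rpow_re_of_pos hq0]
  exact Real.rpow_le_one hq0.le hq1 hw

theorem ofReal_cpow_sum_natCast_mul {ι : Type*} [Fintype ι] (hq : q ≠ 0) (n : ι → ℕ) (u : ι → ℂ) :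
    (q : ℂ) ^ (∑ i, n i * u i) = ∏ i, ((q : ℂ) ^ u i) ^ n i := by
  simp only [← cpow_nat_mul]
  simp only [cpow_def_of_ne_zero (ofReal_ne_zero.2 hq), Finset.mul_sum, exp_sum]

end QNum

theorem zetaQOmega_eq_binomial_series_general {ι : Type*} [Fintype ι] {q : ℝ} (hq0 : 0 < q)
    (hq1 : q < 1) {ω τ : ι → ℂ} (s : ℂ) {z : ℂ} (hω : ∀ i, 0 ≤ (ω i).re)
    (hωτ : ∀ i, 0 < (ω i * τ i).re) (hz : 0 < z.re) :
    (∀ (i : ι) (l : ℕ), 1 - (q : ℂ) ^ (ω i * (τ i + l)) ≠ 0) ∧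
    Summable (fun l : ℕ => ‖(ascPochhammer ℂ l).eval s / l.factorial * (q : ℂ) ^ (l * z) *
      ∏ i, (1 - (q : ℂ) ^ (ω i * (τ i + l)))⁻¹‖) ∧
    HasSum (fun n : ι → ℕ =>
        (q : ℂ) ^ (∑ i, n i * ω i * τ i) / qNum q (∑ i, n i * ω i + z) ^ s)
      (((1 - q : ℝ) : ℂ) ^ s *
        ∑' l : ℕ, (ascPochhammer ℂ l).eval s / l.factorial * (q : ℂ) ^ (l * z) *
          ∏ i, (1 - (q : ℂ) ^ (ω i * (τ i + l)))⁻¹) := by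
  have hq : (q : ℂ) ≠ 0 := ofReal_ne_zero.2 hq0.ne'
  have hratio (i : ι) (l : ℕ) :
      (q : ℂ) ^ (ω i * (τ i + l)) = (q : ℂ) ^ (ω i * τ i) * ((q : ℂ) ^ ω i) ^ l := by
    rw [mul_add, cpow_add _ _ hq, mul_comm (ω i) l, cpow_nat_mul]
  have ha (i : ι) := norm_ofReal_cpow_lt_one hq0 hq1 (hωτ i)
  have hb (i : ι) := norm_ofReal_cpow_le_one hq0 hq1.le (hω i)
  have hc := (hasSum_ascPochhammer_mul_pow s (norm_ofReal_cpow_lt_one hq0 hq1 hz)).summable.norm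
  simp only [hratio, cpow_nat_mul]
  refine ⟨fun i l => ?_, summable_norm_mul_pow_mul_prod_inv_one_sub ha hb hc, ?_⟩
  · exact (isUnit_one_sub_of_norm_lt_one (norm_mul_pow_lt_one (ha i) (hb i) l)).ne_zero
  · refine ((hasSum_prod_pow_mul_tsum ha hb hc).mul_left _).congr_fun fun n => ?_
    have hw : 0 < (∑ i, n i * ω i + z).re := by
      rw [add_re, re_sum]
      refine add_pos_of_nonneg_of_pos (Finset.sum_nonneg fun i _ => ?_) hz
      rw [← ofReal_natCast, re_ofReal_mul]
      exact mul_nonneg (n i).cast_nonneg (hω i)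
    have hpow : (q : ℂ) ^ (∑ i, n i * ω i + z) = (q : ℂ) ^ z * ∏ i, ((q : ℂ) ^ ω i) ^ n i := by
      rw [cpow_add _ _ hq, ofReal_cpow_sum_natCast_mul hq0.ne', mul_comm]
    rw [← hpow, (hasSum_ascPochhammer_mul_pow s (norm_ofReal_cpow_lt_one hq0 hq1 hw)).tsum_eq,
      mul_left_comm, ← one_div_qNum_cpow hq1.le, mul_one_div]
    simp only [mul_assoc, ofReal_cpow_sum_natCast_mul hq0.ne']

theorem ofReal_mul_sub_natCast_re_pos {r : ℕ} {t : ℂ} (ht : (r : ℝ) - 1 < t.re) {x : ℝ}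
    (hx : 0 < x) (i : Fin r) : 0 < (x * (t - (i : ℕ))).re := by
  have hi : ((i : ℕ) : ℝ) + 1 ≤ r := by exact_mod_cast i.2
  rw [re_ofReal_mul, sub_re, natCast_re]
  exact mul_pos hx (by linarith)

/-- For `0 < q < 1`, `r ≥ 1`, positive reals `ω₁,…,ω_r`, `Re t > r − 1` and `Re z > 0`:
`ζ_{q,r}(s,t,z;ω) = (1−q)^s ∑_{l≥0} ((s)_l / l!) q^{lz} ∏_{j=1}^r (1 − q^{ω_j(t−j+1+l)})^{−1}`,
where `(s)_l` is the ascending Pochhammer symbol, each factor `1 − q^{ω_j(t−j+1+l)}` is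
nonzero and the series on the right converges absolutely. -/
theorem zetaQOmega_eq_binomial_series (q : ℝ) (hq0 : 0 < q) (hq1 : q < 1) (r : ℕ)
    (hr : 1 ≤ r) (ω : Fin r → ℝ) (hω : ∀ i, 0 < ω i) (s t z : ℂ)
    (ht : (r : ℝ) - 1 < t.re) (hz : 0 < z.re) :
    (∀ (i : Fin r) (l : ℕ), (1 : ℂ) - (q : ℂ) ^ ((ω i : ℂ) * (t - (i : ℕ) + l)) ≠ 0) ∧
    Summable (fun l : ℕ =>
      ‖((ascPochhammer ℂ l).eval s / (l.factorial : ℂ)) * (q : ℂ) ^ ((l : ℂ) * z) *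
        ∏ i : Fin r, ((1 : ℂ) - (q : ℂ) ^ ((ω i : ℂ) * (t - (i : ℕ) + l)))⁻¹‖) ∧
    zetaQOmega q r ω s t z
      = ((1 - q : ℝ) : ℂ) ^ s *
          ∑' l : ℕ, ((ascPochhammer ℂ l).eval s / (l.factorial : ℂ)) *
            (q : ℂ) ^ ((l : ℂ) * z) *
            ∏ i : Fin r, ((1 : ℂ) - (q : ℂ) ^ ((ω i : ℂ) * (t - (i : ℕ) + l)))⁻¹ := by
  obtain ⟨hne, hsum, hzeta⟩ := zetaQOmega_eq_binomial_series_general hq0 hq1 s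
    (fun i => (hω i).le) (fun i => ofReal_mul_sub_natCast_re_pos ht (hω i) i) hz
  exact ⟨hne, hsum, by simpa [zetaQOmega] using hzeta.tsum_eq⟩
end

section
/- Let q be real with 0 < q < 1, let r ≥ 1 be an integer, let ω_1, …, ω_r be positive reals, let s ∈ ℂ, let t ∈ ℂ with Re(t) > r − 1, and let z ∈ ℂ with Re(z) > 0. Then the family (n1,…,nr) ↦ q^{n1·ω_1·t + n2·ω_2·(t−1) + ⋯ + nr·ω_r·(t−r+1)} / [n1·ω_1 + ⋯ + nr·ω_r + z]_q^s, indexed by r-tuples of nonnegative integers, is absolutely summable. -/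
/-!
A geometric series in finitely many variables, with all ratios of modulus less than `1`, converges
absolutely. It plays two roles. The numerators `q^{∑ nᵢaᵢ}` have norm `∏ (q^{Re aᵢ})^{nᵢ}`, so they
form such a series when `Re aᵢ > 0`. Applied to `ω` in place of `a`, the same fact shows that
`q^{∑ nᵢωᵢ}` tends to `0` along the cofinite filter on tuples, so the denominators tend to
`(1 - q)^{-s}`, which is nonzero; dividing by them preserves absolute convergence.
-/

open Complex

open Filter Topology

lemma summable_prod_apply_of_nonneg {ι : Type*} [Fintype ι] {κ : ι → Type*} {g : ∀ i, κ i → ℝ}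
    (hg : ∀ i k, 0 ≤ g i k) (hs : ∀ i, Summable (g i)) :
    Summable fun f : ∀ i, κ i ↦ ∏ i, g i (f i) := by
  classical
  refine summable_of_sum_le (c := ∏ i, ∑' k, g i k)
    (fun f ↦ Finset.prod_nonneg fun i _ ↦ hg i (f i)) fun u ↦ ?_
  -- Enlarge the finite set of tuples to the product of its coordinate projections.
  let box : Finset (∀ i, κ i) := Fintype.piFinset fun i ↦ u.image (· i)
  have hu : u ⊆ box := fun f hf ↦
    Fintype.mem_piFinset.2 fun i ↦ Finset.mem_image_of_mem (· i) hf
  calc ∑ f ∈ u, ∏ i, g i (f i)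
      ≤ ∑ f ∈ box, ∏ i, g i (f i) :=
        Finset.sum_le_sum_of_subset_of_nonneg hu fun f _ _ ↦
          Finset.prod_nonneg fun i _ ↦ hg i (f i)
    _ = ∏ i, ∑ k ∈ u.image (· i), g i k := (Finset.prod_univ_sum _ _).symm
    _ ≤ ∏ i, ∑' k, g i k :=
        Finset.prod_le_prod (fun i _ ↦ Finset.sum_nonneg fun k _ ↦ hg i k)
          fun i _ ↦ (hs i).sum_le_tsum _ fun k _ ↦ hg i k

lemma summable_prod_pow_of_lt_one {ι : Type*} [Fintype ι] {x : ι → ℝ}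
    (hx0 : ∀ i, 0 ≤ x i) (hx1 : ∀ i, x i < 1) :
    Summable fun f : ι → ℕ ↦ ∏ i, x i ^ f i :=
  summable_prod_apply_of_nonneg (fun i n ↦ pow_nonneg (hx0 i) n)
    fun i ↦ summable_geometric_of_lt_one (hx0 i) (hx1 i)

lemma norm_cpow_sum_natCast_mul {ι : Type*} [Fintype ι] {q : ℝ} (hq : 0 < q) (a : ι → ℂ)
    (f : ι → ℕ) : ‖(q : ℂ) ^ (∑ i, (f i : ℂ) * a i)‖ = ∏ i, (q ^ (a i).re) ^ f i := by
  rw [norm_cpow_eq_rpow_re_of_pos hq, re_sum, Real.rpow_sum_of_pos hq]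
  refine Finset.prod_congr rfl fun i _ ↦ ?_
  rw [← ofReal_natCast, re_ofReal_mul, mul_comm, Real.rpow_mul_natCast hq.le]

lemma summable_norm_cpow_sum_natCast_mul {ι : Type*} [Fintype ι] {q : ℝ} (hq0 : 0 < q)
    (hq1 : q < 1) {a : ι → ℂ} (ha : ∀ i, 0 < (a i).re) :
    Summable fun f : ι → ℕ ↦ ‖(q : ℂ) ^ (∑ i, (f i : ℂ) * a i)‖ := by
  simp only [norm_cpow_sum_natCast_mul hq0]
  exact summable_prod_pow_of_lt_one (fun i ↦ Real.rpow_nonneg hq0.le _)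
    fun i ↦ Real.rpow_lt_one hq0.le hq1 (ha i)

lemma qNum_ne_zero {q : ℝ} (hq0 : 0 < q) (hq1 : q < 1) {w : ℂ} (hw : 0 < w.re) :
    qNum q w ≠ 0 := by
  have hlt : ‖(q : ℂ) ^ w‖ < 1 := by
    rw [norm_cpow_eq_rpow_re_of_pos hq0]
    exact Real.rpow_lt_one hq0.le hq1 hw
  have hnum : (q : ℂ) ^ w ≠ 1 := fun h ↦ by simp [h] at hlt
  exact div_ne_zero (sub_ne_zero.2 hnum.symm) (sub_ne_zero.2 (ofReal_ne_one.2 hq1.ne).symm)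

lemma tendsto_qNum_sum_natCast_mul_add {ι : Type*} [Fintype ι] {q : ℝ} (hq0 : 0 < q)
    (hq1 : q < 1) {ω : ι → ℂ} (hω : ∀ i, 0 < (ω i).re) (z : ℂ) :
    Tendsto (fun f : ι → ℕ ↦ qNum q (∑ i, (f i : ℂ) * ω i + z)) cofinite
      (𝓝 (((1 - q)⁻¹ : ℝ) : ℂ)) := by
  have hpow : Tendsto (fun f : ι → ℕ ↦ (q : ℂ) ^ (∑ i, (f i : ℂ) * ω i)) cofinite (𝓝 0) :=
    tendsto_zero_iff_norm_tendsto_zero.2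
      (summable_norm_cpow_sum_natCast_mul hq0 hq1 hω).tendsto_cofinite_zero
  have hq : (q : ℂ) ≠ 0 := ofReal_ne_zero.2 hq0.ne'
  simpa [qNum, cpow_add _ _ hq] using
    ((hpow.mul_const ((q : ℂ) ^ z)).const_sub 1).div_const (1 - (q : ℂ))

lemma tendsto_inv_qNum_sum_natCast_mul_add_cpow {ι : Type*} [Fintype ι] {q : ℝ} (hq0 : 0 < q)
    (hq1 : q < 1) {ω : ι → ℂ} (hω : ∀ i, 0 < (ω i).re) (s z : ℂ) :
    Tendsto (fun f : ι → ℕ ↦ (qNum q (∑ i, (f i : ℂ) * ω i + z) ^ s)⁻¹) cofinite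
      (𝓝 ((((1 - q)⁻¹ : ℝ) : ℂ) ^ s)⁻¹) := by
  have hpos : 0 < (1 - q)⁻¹ := inv_pos.2 (sub_pos.2 hq1)
  have hne : (((1 - q)⁻¹ : ℝ) : ℂ) ^ s ≠ 0 :=
    cpow_ne_zero_iff.2 (.inl (ofReal_ne_zero.2 hpos.ne'))
  exact ((continuousAt_cpow_const (ofReal_mem_slitPlane.2 hpos)).tendsto.comp
    (tendsto_qNum_sum_natCast_mul_add hq0 hq1 hω z)).inv₀ hne

theorem zetaQOmega_term_summable_general {ι : Type*} [Fintype ι] {q : ℝ} (hq0 : 0 < q)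
    (hq1 : q < 1) {a ω : ι → ℂ} (ha : ∀ i, 0 < (a i).re) (hω : ∀ i, 0 < (ω i).re) (s z : ℂ)
    (_hne : ∀ f : ι → ℕ, qNum q (∑ i, (f i : ℂ) * ω i + z) ≠ 0) :
    Summable fun f : ι → ℕ ↦
      ‖(q : ℂ) ^ (∑ i, (f i : ℂ) * a i) / qNum q (∑ i, (f i : ℂ) * ω i + z) ^ s‖ := by
  simp only [div_eq_mul_inv]
  exact ((summable_norm_cpow_sum_natCast_mul hq0 hq1 ha).mul_tendsto_const
    (tendsto_inv_qNum_sum_natCast_mul_add_cpow hq0 hq1 hω s z)).norm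

lemma mul_sub_natCast_re_pos {r : ℕ} {t : ℂ} (ht : (r : ℝ) - 1 < t.re) {c : ℝ} (hc : 0 < c)
    (i : Fin r) : 0 < ((c : ℂ) * (t - (i : ℕ))).re := by
  have hi : ((i : ℕ) : ℝ) + 1 ≤ r := mod_cast i.isLt
  rw [re_ofReal_mul, sub_re, natCast_re]
  exact mul_pos hc (by linarith)

lemma sum_natCast_mul_add_re_pos {ι : Type*} [Fintype ι] {ω : ι → ℂ} (hω : ∀ i, 0 ≤ (ω i).re)
    {z : ℂ} (hz : 0 < z.re) (f : ι → ℕ) : 0 < (∑ i, (f i : ℂ) * ω i + z).re := by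
  rw [add_re, re_sum]
  refine add_pos_of_nonneg_of_pos (Finset.sum_nonneg fun i _ ↦ ?_) hz
  rw [← ofReal_natCast, re_ofReal_mul]
  exact mul_nonneg (f i).cast_nonneg (hω i)

/-- For `0 < q < 1`, `r ≥ 1`, positive reals `ω₁,…,ω_r`, `Re t > r − 1` and `Re z > 0`,
the family `(n₁,…,n_r) ↦ q^{n₁ω₁t + n₂ω₂(t−1) + ⋯ + n_rω_r(t−r+1)} / [n₁ω₁+⋯+n_rω_r+z]_q^s`
indexed by `r`-tuples of nonnegative integers is absolutely summable. -/
theorem zetaQOmega_term_summable (q : ℝ) (hq0 : 0 < q) (hq1 : q < 1) (r : ℕ)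
    (hr : 1 ≤ r) (ω : Fin r → ℝ) (hω : ∀ i, 0 < ω i) (s t z : ℂ)
    (ht : (r : ℝ) - 1 < t.re) (hz : 0 < z.re) :
    Summable (fun f : Fin r → ℕ =>
      ‖(q : ℂ) ^ (∑ i : Fin r, (f i : ℂ) * (ω i : ℂ) * (t - (i : ℕ)))
        / (qNum q (((∑ i : Fin r, (f i : ℝ) * ω i : ℝ) : ℂ) + z)) ^ s‖) := by
  simpa only [mul_assoc, ofReal_sum, ofReal_mul, ofReal_natCast] using
    zetaQOmega_term_summable_general hq0 hq1 (fun i ↦ mul_sub_natCast_re_pos ht (hω i) i)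
      (ω := fun i ↦ (ω i : ℂ)) hω s z fun f ↦
        qNum_ne_zero hq0 hq1 (sum_natCast_mul_add_re_pos (fun i ↦ (hω i).le) hz f)
end
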